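/- Let G = (V, E) be a finite directed acyclic graph with n vertices. Then the vertex set V can be partitioned into at most 3·⌈√n⌉ pairwise disjoint sets, each of which is either a chain of G or an antichain of G. -/

import Mathlib

/-- A chain of the DAG `(V, E)`: a set of vertices that is traced out by a
directed path (a duplicate-free list whose consecutive elements are joined by edges). -/
def IsDagChain {V : Type*} (E : V → V → Prop) (S : Set V) : Prop :=
  ∃ l : List V, l.Nodup ∧ l.Chain' E ∧ {x | x ∈ l} = S

/-- An antichain of the DAG `(V, E)`: a set of vertices with no edge between any two of them. -/
def IsDagAntichain {V : Type*} (E : V → V → Prop) (S : Set V) : Prop :=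
  ∀ x ∈ S, ∀ y ∈ S, ¬ E x y

theorem dag_chain_nodup {V : Type*} (E : V → V → Prop)
    (hacyc : ∀ v : V, ¬ Relation.TransGen E v v) (l : List V) (h : l.IsChain E) : l.Nodup := by
  have h1 : l.IsChain (Relation.TransGen E) := h.imp (fun _ _ h => Relation.TransGen.single h)
  have h2 : l.Pairwise (Relation.TransGen E) := h1.pairwise
  refine h2.imp ?_
  rintro a b hab rfl
  exact hacyc _ hab

open Classical in
theorem dag_aux {V : Type*} (E : V → V → Prop)
    (hacyc : ∀ v : V, ¬ Relation.TransGen E v v) (m : ℕ) (hm : 0 < m) :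
    ∀ (c : ℕ) (S : Finset V), S.card = c → ∃ (k : ℕ) (f : V → ℕ), k * m ≤ c + m * m ∧
      (∀ v ∈ S, f v < k) ∧
      ∀ i, IsDagChain E {v | v ∈ S ∧ f v = i} ∨ IsDagAntichain E {v | v ∈ S ∧ f v = i} := by
  intro c
  induction c using Nat.strong_induction_on with
  | _ c ih =>
  intro S hS
  by_cases hl : ∃ l : List V, l.IsChain E ∧ (∀ x ∈ l, x ∈ S) ∧ l.length = m
  · obtain ⟨l, hc, hlS, hlen⟩ := hl
    have hnd := dag_chain_nodup E hacyc l hc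
    have hsub : l.toFinset ⊆ S := fun x hx => hlS x (List.mem_toFinset.1 hx)
    have hcard : (S \ l.toFinset).card + m = c := by
      have h1 := Finset.card_sdiff_add_card_eq_card hsub
      rw [List.toFinset_card_of_nodup hnd, hlen, hS] at h1
      exact h1
    obtain ⟨k, f, hk, hf, hF⟩ := ih _ (by omega) (S \ l.toFinset) rfl
    refine ⟨k + 1, fun v => if v ∈ l then k else f v, by rw [add_mul]; omega, ?_, ?_⟩
    · intro v hv
      by_cases hvl : v ∈ l
      · simp [hvl]
      · have := hf v (by simp [hv, hvl])
        simp only [hvl, if_false]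
        omega
    · intro i
      by_cases hi : i = k
      · left
        refine ⟨l, hnd, hc, ?_⟩
        ext v
        simp only [Set.mem_setOf_eq]
        constructor
        · intro hv
          exact ⟨hlS v hv, by simp [hv, hi]⟩
        · rintro ⟨hv, hfv⟩
          by_contra hvl
          have := hf v (by simp [hv, hvl])
          simp only [hvl, if_false] at hfv
          omega
      · have heq : {v | v ∈ S ∧ (if v ∈ l then k else f v) = i}
            = {v | v ∈ S \ l.toFinset ∧ f v = i} := by
          ext v
          by_cases hvl : v ∈ l
          · simp [hvl, Ne.symm hi]
          · simp [hvl]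
        rw [heq]
        exact hF i
  · let P : V → ℕ → Prop := fun v j =>
      ∃ l : List V, (v :: l).IsChain E ∧ (∀ x ∈ v :: l, x ∈ S) ∧ l.length = j
    have hP : ∀ v j, P v j → j < m := by
      rintro v j ⟨l, hc, hlS, hlen⟩
      by_contra hj
      refine hl ⟨(v :: l).take m, hc.take m, fun x hx => hlS x (List.mem_of_mem_take hx), ?_⟩
      rw [List.length_take, List.length_cons]
      omega
    have hP0 : ∀ v ∈ S, P v 0 := fun v hv => ⟨[], by simp, by simpa using hv, rfl⟩
    have hg : ∀ v ∈ S, P v (Nat.findGreatest (P v) m) := fun v hv =>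
      Nat.findGreatest_spec (Nat.zero_le m) (hP0 v hv)
    refine ⟨m, fun v => Nat.findGreatest (P v) m, by omega, fun v hv => hP v _ (hg v hv), ?_⟩
    intro i
    right
    rintro x ⟨hx, hxi⟩ y ⟨hy, hyi⟩ hE
    have hy' := hg y hy
    simp only at hxi hyi
    rw [hyi] at hy'
    obtain ⟨l, hc, hlS, hlen⟩ := hy'
    have hx' : P x (i + 1) :=
      ⟨y :: l, List.isChain_cons_cons.2 ⟨hE, hc⟩, by
        intro z hz
        rcases List.mem_cons.1 hz with rfl | hz
        · exact hx
        · exact hlS z hz, by simp [hlen]⟩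
    have := Nat.le_findGreatest (hP x _ hx').le hx'
    omega

theorem stmt2 {V : Type*} [Fintype V] (E : V → V → Prop)
    (hacyc : ∀ v : V, ¬ Relation.TransGen E v v)
    (n : ℕ) (hn : Fintype.card V = n) :
    ∃ (k : ℕ) (F : Fin k → Set V),
      k ≤ 3 * ⌈Real.sqrt n⌉₊ ∧
      (∀ i, IsDagChain E (F i) ∨ IsDagAntichain E (F i)) ∧
      (∀ i j, i ≠ j → Disjoint (F i) (F j)) ∧
      (⋃ i, F i) = Set.univ := by
  rcases Nat.eq_zero_or_pos n with h0 | hpos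
  · have : IsEmpty V := Fintype.card_eq_zero_iff.1 (hn.trans h0)
    exact ⟨0, fun _ => ∅, Nat.zero_le _, fun i => i.elim0, fun i => i.elim0,
      Set.eq_univ_of_forall fun v => isEmptyElim v⟩
  · have hm : 0 < ⌈Real.sqrt n⌉₊ := Nat.ceil_pos.2 (Real.sqrt_pos.2 (by exact_mod_cast hpos))
    have hle : n ≤ ⌈Real.sqrt n⌉₊ * ⌈Real.sqrt n⌉₊ := by
      have h1 : Real.sqrt n ≤ (⌈Real.sqrt n⌉₊ : ℝ) := Nat.le_ceil _
      have h2 : (n : ℝ) ≤ (⌈Real.sqrt n⌉₊ : ℝ) * ⌈Real.sqrt n⌉₊ := by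
        calc (n : ℝ) = Real.sqrt n * Real.sqrt n := (Real.mul_self_sqrt (Nat.cast_nonneg n)).symm
          _ ≤ _ := mul_le_mul h1 h1 (Real.sqrt_nonneg _) (Nat.cast_nonneg _)
      exact_mod_cast h2
    obtain ⟨k, f, hk, hf, hF⟩ := dag_aux E hacyc _ hm n Finset.univ (by simpa using hn)
    refine ⟨k, fun i => {v | v ∈ Finset.univ ∧ f v = i}, ?_, fun i => hF i, ?_, ?_⟩
    · have : k ≤ 2 * ⌈Real.sqrt n⌉₊ := Nat.le_of_mul_le_mul_right (by linarith) hm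
      omega
    · intro i j hij
      rw [Set.disjoint_left]
      rintro v ⟨_, h1⟩ ⟨_, h2⟩
      exact hij (Fin.ext (h1.symm.trans h2))
    · refine Set.eq_univ_of_forall fun v => Set.mem_iUnion.2 ⟨⟨f v, hf v (Finset.mem_univ v)⟩, ?_⟩
      exact ⟨Finset.mem_univ v, rfl⟩
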